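/- Let d, k be natural numbers and let n₁, …, n_k ∈ ℤ^d be vectors that are linearly independent over ℚ. Let K = {(t₁, …, t_k) ∈ (ℂˣ)^k : for every j, ∏_{i=1}^{k} t_i^{(n_i)_j} = 1}, a subgroup of (ℂˣ)^k. Let L ⊆ ℤ^d be the subgroup generated by n₁, …, n_k and let L' = {v ∈ ℤ^d : m • v ∈ L for some positive integer m} be its saturation. Then K is a finite group, the index of L in L' is finite, and the cardinality of K equals that index. -/

import Mathlib

open Finset in
/-- The subgroup `K = {(t₁, …, t_k) ∈ (ℂˣ)^k : ∀ j, ∏ i, t i ^ (n i) j = 1}` attached to a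
family of integer vectors `n₁, …, n_k ∈ ℤ^d`; for a simplicial cone it is the stabilizer
group `G_σ` of the corresponding coordinate subspace. -/
def stabilizerGroup {d k : ℕ} (n : Fin k → Fin d → ℤ) : Subgroup (Fin k → ℂˣ) where
  carrier := {t | ∀ j : Fin d, ∏ i : Fin k, t i ^ n i j = 1}
  one_mem' := by intro j; simp
  mul_mem' := by
    intro a b ha hb j
    simp only [Set.mem_setOf_eq] at ha hb ⊢
    simp [mul_zpow, Finset.prod_mul_distrib, ha j, hb j]
  inv_mem' := by
    intro a ha j
    simp only [Set.mem_setOf_eq] at ha ⊢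
    simp only [Pi.inv_apply, inv_zpow]
    rw [Finset.prod_inv_distrib, ha j, inv_one]

/-- The saturation `L' = {v ∈ ℤ^d : m • v ∈ L for some positive integer m}` of a subgroup
`L ⊆ ℤ^d`. -/
def saturationOf {d : ℕ} (L : AddSubgroup (Fin d → ℤ)) : AddSubgroup (Fin d → ℤ) where
  carrier := {v | ∃ m : ℕ, 0 < m ∧ m • v ∈ L}
  zero_mem' := ⟨1, Nat.one_pos, by simpa using L.zero_mem⟩
  add_mem' := by
    rintro v w ⟨m, hm, hv⟩ ⟨l, hl, hw⟩
    refine ⟨m * l, Nat.mul_pos hm hl, ?_⟩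
    rw [smul_add]
    exact L.add_mem
      (by rw [mul_comm, mul_smul]; exact L.nsmul_mem hv l)
      (by rw [mul_smul]; exact L.nsmul_mem hw m)
  neg_mem' := by
    rintro v ⟨m, hm, hv⟩
    exact ⟨m, hm, by rw [smul_neg]; exact L.neg_mem hv⟩

/-!
Let `φ : ℂ^k → ℂ^d` send the `i`-th basis vector to `nᵢ`, and let `e : ℂ^k → (ℂˣ)^k` be the
coordinatewise exponential `a ↦ exp (2πi a)`, which is surjective with kernel `ℤ^k`. Then
`e⁻¹ K = φ⁻¹ ℤ^d`, so the order of `K` is the index of `ℤ^k` in `φ⁻¹ ℤ^d`. Since `φ` is injective,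
this index can be computed after applying `φ`, which maps `ℤ^k` onto `L` and `φ⁻¹ ℤ^d` onto
`ℤ^d ∩ im φ`. The latter is the saturation `L'`, because an integer vector in the complex span of
the `nᵢ` already lies in their rational span.
-/

section LatticeCast

variable {ι κ : Type*}

/-- The inclusion `ℤ^κ → R^κ` of the standard lattice, bundled so that lattices in `ℤ^κ` can be
moved to `R^κ` by `AddSubgroup.map`. -/
def latticeCast (R κ : Type*) [AddGroupWithOne R] : (κ → ℤ) →+ (κ → R) :=
  (Int.castAddHom R).compLeft κ

@[simp]
lemma latticeCast_apply {R : Type*} [AddGroupWithOne R] (v : κ → ℤ) (j : κ) :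
    latticeCast R κ v j = v j :=
  rfl

lemma latticeCast_injective (R κ : Type*) [AddGroupWithOne R] [CharZero R] :
    Function.Injective (latticeCast R κ) :=
  Int.cast_injective.comp_left

lemma exists_nsmul_eq_latticeCast [Finite ι] (a : ι → ℚ) :
    ∃ m : ℕ, 0 < m ∧ ∃ b : ι → ℤ, m • a = latticeCast ℚ ι b := by
  have := Fintype.ofFinite ι
  choose e he using fun i => Finset.dvd_prod_of_mem (fun i => (a i).den) (Finset.mem_univ i)
  refine ⟨∏ i, (a i).den, Finset.prod_pos fun i _ => (a i).den_pos,
    fun i => e i * (a i).num, funext fun i => ?_⟩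
  rw [Pi.smul_apply, he i, mul_comm, mul_nsmul', nsmul_eq_mul, nsmul_eq_mul, Rat.den_mul_eq_num,
    latticeCast_apply, Int.cast_mul, Int.cast_natCast]

end LatticeCast

section RayMap

variable {ι κ : Type*} [Fintype ι]

/-- The map `a ↦ ∑ i, a i • n i` from `R^ι` to `R^κ` attached to integer vectors `n i`. For the ray
generators of a cone, `R = ℤ` gives the map of cocharacter lattices and `R = ℂ` the map of Lie
algebras underlying the homomorphism of tori whose kernel is the stabilizer group. -/
def rayMap (R : Type*) [Ring R] (n : ι → κ → ℤ) : (ι → R) →+ (κ → R) :=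
  (Fintype.linearCombination R fun i => latticeCast R κ (n i)).toAddMonoidHom

lemma rayMap_apply {R : Type*} [Ring R] (n : ι → κ → ℤ) (a : ι → R) (j : κ) :
    rayMap R n a j = ∑ i, a i * n i j := by
  simp [rayMap, Fintype.linearCombination_apply]

lemma rayMap_injective (R : Type*) [CommRing R] [IsDomain R] [Algebra ℚ R] [Finite κ]
    {n : ι → κ → ℤ} (hn : LinearIndependent ℚ fun i => latticeCast ℚ κ (n i)) :
    Function.Injective (rayMap R n) := by
  have hR : LinearIndependent R fun i => latticeCast R κ (n i) := by
    convert linearIndependent_algebraMap_comp_iff (S := R).mpr hn using 2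
    ext j
    simp
  exact linearIndependent_iff_injective_fintypeLinearCombination.mp hR

lemma rayMap_latticeCast {R : Type*} [Ring R] (n : ι → κ → ℤ) (a : ι → ℤ) :
    rayMap R n (latticeCast R ι a) = latticeCast R κ (rayMap ℤ n a) := by
  ext j
  simp [rayMap_apply]

lemma range_rayMap_int (n : ι → κ → ℤ) :
    (rayMap ℤ n).range = AddSubgroup.closure (Set.range n) := by
  ext v
  simp [AddSubgroup.mem_closure_range_iff_of_fintype, AddMonoidHom.mem_range, funext_iff,
    rayMap_apply, eq_comm]

lemma map_rayMap_range_latticeCast (R : Type*) [Ring R] (n : ι → κ → ℤ) :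
    (latticeCast R ι).range.map (rayMap R n) =
      (AddSubgroup.closure (Set.range n)).map (latticeCast R κ) := by
  have hcomm : (rayMap R n).comp (latticeCast R ι) = (latticeCast R κ).comp (rayMap ℤ n) :=
    AddMonoidHom.ext (rayMap_latticeCast n)
  rw [← range_rayMap_int, AddMonoidHom.map_range, AddMonoidHom.map_range, hcomm]

lemma latticeCast_mem_range_rayMap_iff {R : Type*} [Ring R] [Nontrivial R] [Algebra ℚ R]
    {n : ι → κ → ℤ} {v : κ → ℤ} :
    latticeCast R κ v ∈ (rayMap R n).range ↔ latticeCast ℚ κ v ∈ (rayMap ℚ n).range := by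
  constructor
  · rintro ⟨a, ha⟩
    -- A `ℚ`-linear retraction of `ℚ → R` turns coefficients in `R` into rational ones.
    obtain ⟨r, hr⟩ := (Algebra.linearMap ℚ R).exists_leftInverse_of_injective
      (LinearMap.ker_eq_bot.mpr (algebraMap ℚ R).injective)
    have hr_mul (x : R) (m : ℤ) : r (x * m) = r x * m := by
      rw [← zsmul_eq_mul', map_zsmul, zsmul_eq_mul']
    have hr_intCast (m : ℤ) : r m = m := by simpa using LinearMap.congr_fun hr m
    refine ⟨r ∘ a, funext fun j => ?_⟩
    have hj : r (rayMap R n a j) = r (latticeCast R κ v j) := by rw [ha]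
    simpa [rayMap_apply, hr_mul, hr_intCast] using hj
  · rintro ⟨a, ha⟩
    refine ⟨algebraMap ℚ R ∘ a, funext fun j => ?_⟩
    have hj : algebraMap ℚ R (rayMap ℚ n a j) = algebraMap ℚ R (latticeCast ℚ κ v j) := by rw [ha]
    simpa [rayMap_apply] using hj

end RayMap

section Saturation

variable {d k : ℕ}

lemma relIndex_saturationOf_ne_zero (L : AddSubgroup (Fin d → ℤ)) :
    L.relIndex (saturationOf L) ≠ 0 := by
  have hfg : Module.Finite ℤ (AddSubgroup.toIntSubmodule (saturationOf L)) := inferInstance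
  have : AddGroup.FG (saturationOf L) := Module.Finite.iff_addGroup_fg.mp hfg
  have htors : IsAddTorsion (saturationOf L ⧸ L.addSubgroupOf (saturationOf L)) := by
    intro x
    obtain ⟨⟨v, m, hm, hv⟩, rfl⟩ := QuotientAddGroup.mk_surjective x
    exact isOfFinAddOrder_iff_nsmul_eq_zero.mpr ⟨m, hm, (QuotientAddGroup.eq_zero_iff _).mpr hv⟩
  have := AddCommGroup.finite_of_fg_isAddTorsion _ htors
  exact AddSubgroup.index_ne_zero_of_finite

lemma mem_saturationOf_closure_range_iff {n : Fin k → Fin d → ℤ} {v : Fin d → ℤ} :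
    v ∈ saturationOf (AddSubgroup.closure (Set.range n)) ↔
      latticeCast ℚ (Fin d) v ∈ (rayMap ℚ n).range := by
  rw [← range_rayMap_int]
  constructor
  · rintro ⟨m, hm, b, hb⟩
    refine ⟨(m : ℚ)⁻¹ • latticeCast ℚ (Fin k) b, ?_⟩
    rw [map_rat_smul, rayMap_latticeCast, hb, map_nsmul, ← Nat.cast_smul_eq_nsmul ℚ,
      inv_smul_smul₀ (Nat.cast_ne_zero.mpr hm.ne')]
  · rintro ⟨a, ha⟩
    obtain ⟨m, hm, b, hb⟩ := exists_nsmul_eq_latticeCast a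
    refine ⟨m, hm, b, latticeCast_injective ℚ _ ?_⟩
    rw [← rayMap_latticeCast, ← hb, map_nsmul, ha, map_nsmul]

lemma map_rayMap_comap_range_latticeCast (R : Type*) [Ring R] [Nontrivial R] [Algebra ℚ R]
    (n : Fin k → Fin d → ℤ) :
    ((latticeCast R (Fin d)).range.comap (rayMap R n)).map (rayMap R n) =
      (saturationOf (AddSubgroup.closure (Set.range n))).map (latticeCast R (Fin d)) := by
  have hsat : saturationOf (AddSubgroup.closure (Set.range n)) =
      (rayMap R n).range.comap (latticeCast R (Fin d)) := by
    ext v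
    exact mem_saturationOf_closure_range_iff.trans latticeCast_mem_range_rayMap_iff.symm
  rw [hsat, AddSubgroup.map_comap_eq, AddSubgroup.map_comap_eq, inf_comm]

end Saturation

section TorusExp

variable {ι κ : Type*}

/-- The universal covering `a ↦ (exp (2πi aᵢ))ᵢ` of the torus `(ℂˣ)^ι`, as a homomorphism of
additive groups, so that preimages of subgroups of the torus can be compared with lattices in
`ℂ^ι`. -/
noncomputable def torusExp (ι : Type*) : (ι → ℂ) →+ Additive (ι → ℂˣ) where
  toFun a := .ofMul fun i =>
    .mk0 (Complex.exp (a i * (2 * Real.pi * Complex.I))) (Complex.exp_ne_zero _)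
  map_zero' := by
    apply Additive.toMul.injective
    ext i
    simp
  map_add' a b := by
    apply Additive.toMul.injective
    ext i
    simp [add_mul, Complex.exp_add]

lemma torusExp_apply (a : ι → ℂ) (i : ι) :
    ((torusExp ι a).toMul i : ℂ) = Complex.exp (a i * (2 * Real.pi * Complex.I)) :=
  rfl

lemma torusExp_surjective (ι : Type*) : Function.Surjective (torusExp ι) := by
  intro t
  refine ⟨fun i => Complex.log (t.toMul i) / (2 * Real.pi * Complex.I), ?_⟩
  apply Additive.toMul.injective
  ext i
  rw [torusExp_apply, div_mul_cancel₀ _ Complex.two_pi_I_ne_zero,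
    Complex.exp_log (t.toMul i).ne_zero]

lemma ker_torusExp (ι : Type*) : (torusExp ι).ker = (latticeCast ℂ ι).range := by
  ext a
  calc torusExp ι a = 0
    _ ↔ ∀ i, Complex.exp (a i * (2 * Real.pi * Complex.I)) = 1 := by
      simp only [← Additive.toMul.injective.eq_iff, funext_iff, Units.ext_iff, torusExp_apply]
      rfl
    _ ↔ ∀ i, ∃ m : ℤ, a i = m := by
      simp only [Complex.exp_eq_one_iff, mul_left_inj' Complex.two_pi_I_ne_zero]
    _ ↔ a ∈ (latticeCast ℂ ι).range := by
      simp [Classical.skolem, AddMonoidHom.mem_range, funext_iff, eq_comm]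

lemma prod_torusExp_zpow [Fintype ι] (n : ι → κ → ℤ) (a : ι → ℂ) (j : κ) :
    ∏ i, (torusExp ι a).toMul i ^ n i j = (torusExp κ (rayMap ℂ n a)).toMul j := by
  ext
  simp only [Units.coe_prod, Units.val_zpow_eq_zpow_val, torusExp_apply, rayMap_apply,
    ← Complex.exp_int_mul, ← Complex.exp_sum, Finset.sum_mul]
  congr! 2
  ring

end TorusExp

section Stabilizer

variable {d k : ℕ}

lemma comap_torusExp_stabilizerGroup (n : Fin k → Fin d → ℤ) :
    (stabilizerGroup n).toAddSubgroup.comap (torusExp (Fin k)) =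
      (latticeCast ℂ (Fin d)).range.comap (rayMap ℂ n) := by
  ext a
  rw [← ker_torusExp]
  calc (torusExp (Fin k) a).toMul ∈ stabilizerGroup n
    _ ↔ ∀ j, (torusExp (Fin d) (rayMap ℂ n a)).toMul j = 1 :=
      forall_congr' fun j => by rw [prod_torusExp_zpow]
    _ ↔ torusExp (Fin d) (rayMap ℂ n a) = 0 := by
      rw [← Additive.toMul.injective.eq_iff, funext_iff]
      rfl

lemma card_stabilizerGroup_eq_relIndex (n : Fin k → Fin d → ℤ) :
    Nat.card (stabilizerGroup n) =
      (latticeCast ℂ (Fin k)).range.relIndex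
        ((latticeCast ℂ (Fin d)).range.comap (rayMap ℂ n)) := by
  rw [← comap_torusExp_stabilizerGroup, ← ker_torusExp, AddSubgroup.relIndex_ker,
    AddSubgroup.map_comap_eq_self_of_surjective (torusExp_surjective _)]
  rfl

end Stabilizer

/-- **Order of the stabilizer group of a simplicial cone.**
Let `n₁, …, n_k ∈ ℤ^d` be linearly independent over `ℚ`, let
`K = {t ∈ (ℂˣ)^k : ∀ j, ∏ i, t i ^ (n i) j = 1}`, let `L ⊆ ℤ^d` be the subgroup generated
by the `nᵢ` and `L'` its saturation.  Then `K` is finite, `L` has finite index in `L'`,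
and the order of `K` equals that index (the multiplicity of the cone). -/
theorem card_stabilizerGroup_eq_multiplicity
    {d k : ℕ} (n : Fin k → Fin d → ℤ)
    (hind : LinearIndependent ℚ fun i : Fin k => fun j : Fin d => (n i j : ℚ)) :
    Finite ↥(stabilizerGroup n) ∧
    ((AddSubgroup.closure (Set.range n)).addSubgroupOf
        (saturationOf (AddSubgroup.closure (Set.range n)))).index ≠ 0 ∧
    Nat.card ↥(stabilizerGroup n) =
      ((AddSubgroup.closure (Set.range n)).addSubgroupOf
        (saturationOf (AddSubgroup.closure (Set.range n)))).index := by
  set L := AddSubgroup.closure (Set.range n)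
  have hindex : L.relIndex (saturationOf L) ≠ 0 := relIndex_saturationOf_ne_zero L
  have hcard : Nat.card (stabilizerGroup n) = L.relIndex (saturationOf L) :=
    calc Nat.card (stabilizerGroup n)
      _ = (latticeCast ℂ (Fin k)).range.relIndex
            ((latticeCast ℂ (Fin d)).range.comap (rayMap ℂ n)) :=
        card_stabilizerGroup_eq_relIndex n
      _ = (L.map (latticeCast ℂ _)).relIndex ((saturationOf L).map (latticeCast ℂ _)) := by
        rw [← AddSubgroup.relIndex_map_map_of_injective _ _ (rayMap_injective ℂ hind),
          map_rayMap_range_latticeCast, map_rayMap_comap_range_latticeCast]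
      _ = L.relIndex (saturationOf L) :=
        AddSubgroup.relIndex_map_map_of_injective _ _ (latticeCast_injective ℂ _)
  exact ⟨Nat.finite_of_card_ne_zero (hcard ▸ hindex), hindex, hcard⟩
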